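/- Let D be an ADF and let v and v' be strongly admissible interpretations of D. Then v and v' have a unique infimum in the set of strongly admissible interpretations of D ordered by ≤_i: there exists a strongly admissible interpretation w of D with w ≤_i v and w ≤_i v' such that every strongly admissible interpretation w'' of D with w'' ≤_i v and w'' ≤_i v' satisfies w'' ≤_i w. -/

import Mathlib

/-!
Strong acceptability and deniability are monotone in the information order: a justification of `a`
with respect to `x` is also one with respect to any `y` carrying more information, with the same
set `S` and the same sets `P` (`SJrel.mono`). Consequently the pointwise join of all strongly
admissible interpretations below both `v` and `v'` is again strongly admissible. The join exists
because any two of these interpretations agree with `v`, hence with each other, wherever they are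
decided. It is the greatest strongly admissible lower bound (`infI`).
-/

/-- Three truth values: true, false, undecided. -/
inductive TV : Type
  | t | f | u
deriving DecidableEq, Repr

/-- The information order on truth values: u <_i t and u <_i f. -/
def TV.ile (x y : TV) : Prop := x = TV.u ∨ x = y

/-- The information order on interpretations, extended pointwise. -/
def ILE {A : Type*} (v w : A → TV) : Prop := ∀ a, TV.ile (v a) (w a)

/-- An abstract dialectical framework on a set of arguments `A`:
each argument `a` has an acceptance condition `C a : (A → Bool) → Bool`. -/
structure ADF (A : Type*) where
  C : A → (A → Bool) → Bool

/-- The trivial interpretation mapping every argument to undecided. -/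
def trivialInterp (A : Type*) : A → TV := fun _ => TV.u

/-- The parents of `a` are the arguments on which its acceptance condition depends. -/
def ADF.parents {A : Type*} [DecidableEq A] (D : ADF A) (a : A) : Set A :=
  {b | ∃ w : A → Bool, D.C a w ≠ D.C a (Function.update w b (!w b))}

/-- A two-valued assignment `w` completes a three-valued interpretation `v`. -/
def Completes {A : Type*} (w : A → Bool) (v : A → TV) : Prop :=
  ∀ b, (v b = TV.t → w b = true) ∧ (v b = TV.f → w b = false)

/-- `φ` is irrefutable under `v`: every completion of `v` makes `φ` true. -/
def Irrefutable {A : Type*} (φ : (A → Bool) → Bool) (v : A → TV) : Prop :=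
  ∀ w : A → Bool, Completes w v → φ w = true

/-- `φ` is unsatisfiable under `v`: every completion of `v` makes `φ` false. -/
def Unsat {A : Type*} (φ : (A → Bool) → Bool) (v : A → TV) : Prop :=
  ∀ w : A → Bool, Completes w v → φ w = false

open Classical in
/-- The characteristic operator Γ_D of an ADF. -/
noncomputable def Gamma {A : Type*} (D : ADF A) (v : A → TV) : A → TV := fun a =>
  if Irrefutable (D.C a) v then TV.t
  else if Unsat (D.C a) v then TV.f
  else TV.u

open Classical in
/-- `v|_P`: agrees with `v` on `P` and is undecided elsewhere. -/
noncomputable def restrictTV {A : Type*} (v : A → TV) (P : Set A) : A → TV :=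
  fun b => if b ∈ P then v b else TV.u

/-- Strong acceptability/deniability of an argument with respect to interpretation `v`
and set `S`, relative to an excluded set `E` (the first index). An argument `a` with
`v a = t` (resp. `v a = f`) is strongly acceptable (resp. strongly deniable) iff there is
`P ⊆ (parents a ∩ S) \ E` with `φ_a^{v|_P}` irrefutable (resp. unsatisfiable) and every
`p ∈ P` strongly acceptable/deniable relative to `E ∪ {p}`. -/
inductive SJrel {A : Type*} [DecidableEq A] (D : ADF A) (v : A → TV) (S : Set A) :
    Set A → A → Prop
  | acc (E : Set A) (a : A) (P : Set A)
      (ha : v a = TV.t)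
      (hP : P ⊆ (D.parents a ∩ S) \ E)
      (hirr : Irrefutable (D.C a) (restrictTV v P))
      (hrec : ∀ p ∈ P, SJrel D v S (E ∪ {p}) p) : SJrel D v S E a
  | den (E : Set A) (a : A) (P : Set A)
      (ha : v a = TV.f)
      (hP : P ⊆ (D.parents a ∩ S) \ E)
      (hunsat : Unsat (D.C a) (restrictTV v P))
      (hrec : ∀ p ∈ P, SJrel D v S (E ∪ {p}) p) : SJrel D v S E a

/-- `a` is strongly acceptable/deniable w.r.t. `v` and `S`
(i.e., relative to the excluded set `{a}`). -/
def StronglyJustified {A : Type*} [DecidableEq A] (D : ADF A) (v : A → TV)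
    (S : Set A) (a : A) : Prop :=
  SJrel D v S {a} a

/-- `S` is a least set for `a` with respect to `v`. -/
def LeastSet {A : Type*} [DecidableEq A] (D : ADF A) (v : A → TV)
    (a : A) (S : Set A) : Prop :=
  StronglyJustified D v S a ∧
  ∀ S' : Set A, S'.ncard < S.ncard → ¬ StronglyJustified D v S' a

/-- An interpretation is strongly admissible iff every argument assigned `t`/`f`
is strongly acceptable/deniable w.r.t. `v` and some set `S`. -/
def StronglyAdmissible {A : Type*} [DecidableEq A] (D : ADF A) (v : A → TV) : Prop :=
  ∀ a : A, v a ≠ TV.u → ∃ S : Set A, StronglyJustified D v S a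

/-- `g` is the grounded interpretation of `D`: the least fixed point of `Γ_D`. -/
def IsGrounded {A : Type*} (D : ADF A) (g : A → TV) : Prop :=
  Gamma D g = g ∧ ∀ w : A → TV, Gamma D w = w → ILE g w

/-- An interpretation is admissible iff `v ≤_i Γ_D(v)`. -/
def Admissible {A : Type*} (D : ADF A) (v : A → TV) : Prop :=
  ILE v (Gamma D v)

/-- An interpretation is conflict-free. -/
def ConflictFree {A : Type*} (D : ADF A) (v : A → TV) : Prop :=
  ∀ a : A, (v a = TV.t → ∃ w : A → Bool, Completes w v ∧ D.C a w = true) ∧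
           (v a = TV.f → Unsat (D.C a) v)

/-- The join of two interpretations: take `v`'s value where defined, else `w`'s. -/
def joinI {A : Type*} (v w : A → TV) : A → TV :=
  fun a => if v a = TV.u then w a else v a

theorem Completes.anti {A : Type*} {x y : A → TV} (h : ILE x y) {w : A → Bool}
    (hw : Completes w y) : Completes w x := by
  intro b
  rcases h b with hb | hb
  · simp [hb]
  · rw [hb]
    exact hw b

theorem ILE.restrictTV {A : Type*} {x y : A → TV} (h : ILE x y) (P : Set A) :
    ILE (restrictTV x P) (restrictTV y P) := by
  intro b
  by_cases hb : b ∈ P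
  · simpa [_root_.restrictTV, hb] using h b
  · simp [_root_.restrictTV, hb, TV.ile]

theorem ILE.eq_of_ne {A : Type*} {x y : A → TV} (h : ILE x y) {a : A} (ha : x a ≠ TV.u) :
    y a = x a :=
  ((h a).resolve_left ha).symm

theorem ILE.antisymm {A : Type*} {x y : A → TV} (h : ILE x y) (h' : ILE y x) : x = y := by
  funext a
  rcases h a with ha | ha
  · rcases h' a with hb | hb
    · rw [ha, hb]
    · exact hb.symm
  · exact ha

/-- Strong acceptability/deniability persists when the interpretation gains information, with the
same `S` and the same excluded set. -/
theorem SJrel.mono {A : Type*} [DecidableEq A] {D : ADF A} {x y : A → TV} (h : ILE x y)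
    {S E : Set A} {a : A} (ha : SJrel D x S E a) : SJrel D y S E a := by
  induction ha with
  | acc E a P ha hP hirr _ ih =>
    refine .acc E a P ?_ hP (fun w hw => hirr w (hw.anti (h.restrictTV P))) ih
    rw [h.eq_of_ne (by simp [ha]), ha]
  | den E a P ha hP hunsat _ ih =>
    refine .den E a P ?_ hP (fun w hw => hunsat w (hw.anti (h.restrictTV P))) ih
    rw [h.eq_of_ne (by simp [ha]), ha]

open Classical in
/-- The join of all strongly admissible interpretations below both `v` and `v'`. Wherever one of
them is decided its value is that of `v`, so the join can be read off from `v`. -/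
noncomputable def infI {A : Type*} [DecidableEq A] (D : ADF A) (v v' : A → TV) : A → TV :=
  fun a => if ∃ x : A → TV, StronglyAdmissible D x ∧ ILE x v ∧ ILE x v' ∧ x a ≠ TV.u
    then v a else TV.u

theorem exists_of_infI_ne {A : Type*} [DecidableEq A] {D : ADF A} {v v' : A → TV} {a : A}
    (h : infI D v v' a ≠ TV.u) :
    ∃ x : A → TV, StronglyAdmissible D x ∧ ILE x v ∧ ILE x v' ∧ x a ≠ TV.u := by
  by_contra hx
  exact h (if_neg hx)

theorem le_infI {A : Type*} [DecidableEq A] {D : ADF A} {v v' x : A → TV}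
    (hx : StronglyAdmissible D x) (hv : ILE x v) (hv' : ILE x v') : ILE x (infI D v v') := by
  intro a
  by_cases ha : x a = TV.u
  · exact Or.inl ha
  · right
    rw [infI, if_pos ⟨x, hx, hv, hv', ha⟩, hv.eq_of_ne ha]

theorem infI_le {A : Type*} [DecidableEq A] (D : ADF A) (v v' : A → TV) :
    ILE (infI D v v') v ∧ ILE (infI D v v') v' := by
  refine ⟨fun a => or_iff_not_imp_left.2 fun ha => ?_, fun a => or_iff_not_imp_left.2 fun ha => ?_⟩
  all_goals
    obtain ⟨x, hx, hv, hv', hxa⟩ := exists_of_infI_ne ha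
    rw [(le_infI hx hv hv').eq_of_ne hxa]
  · exact (hv.eq_of_ne hxa).symm
  · exact (hv'.eq_of_ne hxa).symm

theorem stronglyAdmissible_infI {A : Type*} [DecidableEq A] (D : ADF A) (v v' : A → TV) :
    StronglyAdmissible D (infI D v v') := by
  intro a ha
  obtain ⟨x, hx, hv, hv', hxa⟩ := exists_of_infI_ne ha
  obtain ⟨S, hS⟩ := hx a hxa
  exact ⟨S, SJrel.mono (le_infI hx hv hv') hS⟩

/-- Every two strongly admissible interpretations have a unique
infimum among the strongly admissible interpretations. -/
theorem strongly_admissible_infimum {A : Type*} [Fintype A] [DecidableEq A]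
    (D : ADF A) (v v' : A → TV)
    (hv : StronglyAdmissible D v) (hv' : StronglyAdmissible D v') :
    ∃! w : A → TV, StronglyAdmissible D w ∧ ILE w v ∧ ILE w v' ∧
      ∀ w'' : A → TV, StronglyAdmissible D w'' → ILE w'' v → ILE w'' v' →
        ILE w'' w := by
  obtain ⟨h, h'⟩ := infI_le D v v'
  refine ⟨infI D v v', ⟨stronglyAdmissible_infI D v v', h, h', fun _ => le_infI⟩, ?_⟩
  rintro y ⟨hy, hyv, hyv', hmax⟩
  exact (le_infI hy hyv hyv').antisymm (hmax _ (stronglyAdmissible_infI D v v') h h')
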